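/- Combined non-conforming upper bound (Theorem 3.1, upper part): let ṽ ∈ L²(Ω;ℝ^N) and E := ∇û − A^{−1}ṽ. Then for every v ∈ L²(Ω;ℝ^N) possessing a weak divergence div v ∈ L²₊₁(Ω) and every u ∈ L²₋₁(Ω) with weak gradient ∇u ∈ L²(Ω;ℝ^N) such that û − u ∈ H¹°₋₁(Ω), ‖E‖²_A ≤ (c_{N,α}‖f + div v‖_{L²₊₁(Ω)} + ‖A^{−1}(ṽ − v)‖_A)² + ‖∇u − A^{−1}ṽ‖²_A. -/

import Mathlib

open MeasureTheory Filter Topology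
open scoped RealInnerProductSpace

noncomputable section

/-- Euclidean space `ℝ^N`. -/
abbrev Euc (N : ℕ) := EuclideanSpace ℝ (Fin N)

/-- The Poincaré constant `c_N = 2/(N-2)`. -/
def cN (N : ℕ) : ℝ := 2 / ((N : ℝ) - 2)

variable {N : ℕ}

/-- Squared weighted `L²_s(Ω)` norm: `∫_Ω (1+|x|²)^s u(x)² dx`. -/
def sqL2 (Ω : Set (Euc N)) (s : ℝ) (u : Euc N → ℝ) : ℝ :=
  ∫ x in Ω, (1 + ‖x‖ ^ 2) ^ s * u x ^ 2

/-- Weighted `L²_s(Ω)` norm. -/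
def nrmL2 (Ω : Set (Euc N)) (s : ℝ) (u : Euc N → ℝ) : ℝ :=
  Real.sqrt (sqL2 Ω s u)

/-- Membership in the weighted space `L²_s(Ω)` (scalar functions). -/
def MemL2 (Ω : Set (Euc N)) (s : ℝ) (u : Euc N → ℝ) : Prop :=
  AEStronglyMeasurable u (volume.restrict Ω) ∧
    Integrable (fun x => (1 + ‖x‖ ^ 2) ^ s * u x ^ 2) (volume.restrict Ω)

/-- Squared weighted `L²_s(Ω;ℝ^N)` norm for vector fields. -/
def sqL2V (Ω : Set (Euc N)) (s : ℝ) (v : Euc N → Euc N) : ℝ :=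
  ∫ x in Ω, (1 + ‖x‖ ^ 2) ^ s * ‖v x‖ ^ 2

/-- Weighted `L²_s(Ω;ℝ^N)` norm for vector fields. -/
def nrmL2V (Ω : Set (Euc N)) (s : ℝ) (v : Euc N → Euc N) : ℝ :=
  Real.sqrt (sqL2V Ω s v)

/-- Membership in the weighted space `L²_s(Ω;ℝ^N)` (vector fields). -/
def MemL2V (Ω : Set (Euc N)) (s : ℝ) (v : Euc N → Euc N) : Prop :=
  AEStronglyMeasurable v (volume.restrict Ω) ∧
    Integrable (fun x => (1 + ‖x‖ ^ 2) ^ s * ‖v x‖ ^ 2) (volume.restrict Ω)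

/-- Test functions: `φ ∈ C_c^∞(Ω)`. -/
def IsTest (Ω : Set (Euc N)) (φ : Euc N → ℝ) : Prop :=
  ContDiff ℝ (⊤ : ℕ∞) φ ∧ HasCompactSupport φ ∧ tsupport φ ⊆ Ω

/-- `g` is the weak gradient of `u` on `Ω`:
`∫_Ω u ∇φ = −∫_Ω φ g` for all test functions `φ`. -/
def IsWeakGrad (Ω : Set (Euc N)) (u : Euc N → ℝ) (g : Euc N → Euc N) : Prop :=
  ∀ φ : Euc N → ℝ, IsTest Ω φ →
    (∫ x in Ω, u x • gradient φ x) = - ∫ x in Ω, φ x • g x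

/-- `d` is the weak divergence of the vector field `v` on `Ω`:
`∫_Ω v·∇φ = −∫_Ω d φ` for all test functions `φ`. -/
def IsWeakDiv (Ω : Set (Euc N)) (v : Euc N → Euc N) (d : Euc N → ℝ) : Prop :=
  ∀ φ : Euc N → ℝ, IsTest Ω φ →
    (∫ x in Ω, ⟪v x, gradient φ x⟫) = - ∫ x in Ω, d x * φ x

/-- `u ∈ H¹°₋₁(Ω)` with weak gradient `g`: `u ∈ L²₋₁(Ω)`, `g ∈ L²(Ω;ℝ^N)` is the weak
gradient of `u`, and `u` is approximated by test functions in the natural norms. -/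
def MemH10 (Ω : Set (Euc N)) (u : Euc N → ℝ) (g : Euc N → Euc N) : Prop :=
  MemL2 Ω (-1) u ∧ MemL2V Ω 0 g ∧ IsWeakGrad Ω u g ∧
    ∃ φ : ℕ → Euc N → ℝ, (∀ n, IsTest Ω (φ n)) ∧
      Tendsto (fun n => nrmL2 Ω (-1) (fun x => u x - φ n x)) atTop (𝓝 0) ∧
      Tendsto (fun n => nrmL2V Ω 0 (fun x => g x - gradient (φ n) x)) atTop (𝓝 0)

/-- `g ∈ 𝒢`, the closure in `L²(Ω;ℝ^N)` of `{∇φ : φ ∈ C_c^∞(Ω)}`. -/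
def MemG (Ω : Set (Euc N)) (g : Euc N → Euc N) : Prop :=
  MemL2V Ω 0 g ∧
    ∃ φ : ℕ → Euc N → ℝ, (∀ n, IsTest Ω (φ n)) ∧
      Tendsto (fun n => nrmL2V Ω 0 (fun x => g x - gradient (φ n) x)) atTop (𝓝 0)

/-- `ψ ∈ D₀`, the set of weakly divergence-free fields in `L²(Ω;ℝ^N)`. -/
def MemD0 (Ω : Set (Euc N)) (ψ : Euc N → Euc N) : Prop :=
  MemL2V Ω 0 ψ ∧
    ∀ φ : Euc N → ℝ, IsTest Ω φ → (∫ x in Ω, ⟪ψ x, gradient φ x⟫) = 0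

/-- The coefficient matrix field `A : Ω → ℝ^{N×N}`: measurable, essentially bounded,
symmetric, and uniformly coercive (`A(x)ξ·ξ ≥ α⁻²|ξ|²` for a.e. `x ∈ Ω`). -/
structure Coeff (N : ℕ) (Ω : Set (Euc N)) where
  A : Euc N → Euc N →L[ℝ] Euc N
  α : ℝ
  α_pos : 0 < α
  meas : ∀ ξ : Euc N, AEStronglyMeasurable (fun x => A x ξ) (volume.restrict Ω)
  bdd : ∃ C : ℝ, ∀ᵐ x ∂(volume.restrict Ω), ∀ ξ : Euc N, ‖A x ξ‖ ≤ C * ‖ξ‖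
  symm : ∀ x : Euc N, ∀ ξ η : Euc N, ⟪A x ξ, η⟫ = ⟪ξ, A x η⟫
  coer : ∀ᵐ x ∂(volume.restrict Ω), ∀ ξ : Euc N, α⁻¹ ^ 2 * ‖ξ‖ ^ 2 ≤ ⟪A x ξ, ξ⟫

/-- The weighted inner product `⟨v,w⟩_A = ∫_Ω A v · w dx`. -/
def ipA (Ω : Set (Euc N)) (A : Euc N → Euc N →L[ℝ] Euc N) (v w : Euc N → Euc N) : ℝ :=
  ∫ x in Ω, ⟪A x (v x), w x⟫

/-- The squared `A`-weighted norm `‖v‖²_A = ∫_Ω A v · v dx`. -/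
def sqA (Ω : Set (Euc N)) (A : Euc N → Euc N →L[ℝ] Euc N) (v : Euc N → Euc N) : ℝ :=
  ipA Ω A v v

/-- The `A`-weighted norm `‖v‖_A`. -/
def nrmA (Ω : Set (Euc N)) (A : Euc N → Euc N →L[ℝ] Euc N) (v : Euc N → Euc N) : ℝ :=
  Real.sqrt (sqA Ω A v)

/-- `w = A⁻¹ v` (a.e. on `Ω`), with `w ∈ L²(Ω;ℝ^N)`. -/
def IsAInv (Ω : Set (Euc N)) (A : Euc N → Euc N →L[ℝ] Euc N) (v w : Euc N → Euc N) : Prop :=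
  MemL2V Ω 0 w ∧ ∀ᵐ x ∂(volume.restrict Ω), A x (w x) = v x

/-!
For a test function `φ`, the weak equation and `A w = v` give
`⟨∇û - w, ∇φ⟩_A = ∫ (f + div v) φ`, which is at most `c_{N,α} ‖f + div v‖ ‖∇φ‖_A` by the weighted
Poincaré inequality `‖φ‖_{L²₋₁} ≤ c_N ‖∇φ‖`. Since `E = (∇û - w) - (A⁻¹ṽ - w)`, this makes
`⟨E, ·⟩_A` bounded on gradients of test functions by
`a = c_{N,α} ‖f + div v‖ + ‖A⁻¹ṽ - w‖_A`. The bound passes to the closure, which contains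
`G = ∇û - ∇u`, so `‖E - G‖² = ‖E‖² - 2⟨E, G⟩ + ‖G‖² ≥ ‖E‖² - a²`, and `E - G = ∇u - A⁻¹ṽ`.

The Poincaré inequality comes from integrating the radial derivative `x · ∇` of
`(1 + |x|²)⁻¹ φ²`, whose integral is `-N` times that of the function itself.
-/

section InnerProduct

variable {H : Type*} [SeminormedAddCommGroup H] [InnerProductSpace ℝ H]

theorem norm_sq_le_sq_add_norm_sub_sq_of_mem_closure {K : Set H} {e g : H} {a : ℝ}
    (hK : ∀ y ∈ K, ⟪e, y⟫ ≤ a * ‖y‖) (hg : g ∈ closure K) :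
    ‖e‖ ^ 2 ≤ a ^ 2 + ‖e - g‖ ^ 2 := by
  have hclosed : IsClosed {y : H | ⟪e, y⟫ ≤ a * ‖y‖} :=
    isClosed_le (by fun_prop) (by fun_prop)
  have hle : ⟪e, g⟫ ≤ a * ‖g‖ := closure_minimal hK hclosed hg
  have hsub := norm_sub_sq_real e g
  linarith [sq_nonneg (a - ‖g‖)]

end InnerProduct

section CauchySchwarz

variable {X : Type*} {mX : MeasurableSpace X} {μ : Measure X}

theorem integral_mul_le_sqrt_mul_sqrt {f g : X → ℝ} (hf : MemLp f 2 μ) (hg : MemLp g 2 μ) :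
    ∫ x, f x * g x ∂μ ≤ √(∫ x, f x ^ 2 ∂μ) * √(∫ x, g x ^ 2 ∂μ) := by
  have holder := integral_mul_norm_le_Lp_mul_Lq Real.HolderConjugate.two_two
    (by simpa using hf) (by simpa using hg)
  simp only [Real.norm_eq_abs, Real.rpow_two, sq_abs, ← Real.sqrt_eq_rpow] at holder
  refine (integral_mono (hf.integrable_mul hg) (hf.abs.integrable_mul hg.abs) fun x => ?_).trans
    holder
  exact (le_abs_self _).trans_eq (abs_mul _ _)

end CauchySchwarz

section WeightedPoincare

open Module (finrank)

theorem integral_fderiv_apply_self {E G : Type*} [MeasurableSpace E] [NormedAddCommGroup E]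
    [NormedSpace ℝ E] [FiniteDimensional ℝ E] [BorelSpace E] [NormedAddCommGroup G]
    [NormedSpace ℝ G] (μ : Measure E) [μ.IsAddHaarMeasure] {u : E → G} (hu : ContDiff ℝ 1 u)
    (hu_supp : HasCompactSupport u) :
    ∫ x, fderiv ℝ u x x ∂μ = -((finrank ℝ E : ℝ) • ∫ x, u x ∂μ) := by
  let b := Module.finBasis ℝ E
  let ℓ (i) : E →L[ℝ] ℝ := (b.coord i).toContinuousLinearMap
  have hu' : Continuous (fderiv ℝ u) := hu.continuous_fderiv one_ne_zero
  have term_integrable (i) : Integrable (fun x => ℓ i x • fderiv ℝ u x (b i)) μ :=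
    ((ℓ i).continuous.smul (hu'.clm_apply continuous_const)).integrable_of_hasCompactSupport
      (hu_supp.fderiv_apply ℝ (b i)).smul_left
  have term_integral (i) : ∫ x, ℓ i x • fderiv ℝ u x (b i) ∂μ = -∫ x, u x ∂μ := by
    have hℓ (x) : fderiv ℝ (ℓ i) x (b i) = 1 := by
      rw [ContinuousLinearMap.fderiv]
      simp [ℓ]
    rw [integral_smul_fderiv_eq_neg_fderiv_smul_of_integrable]
    · simp only [hℓ, one_smul]
    · simpa only [hℓ, one_smul] using hu.continuous.integrable_of_hasCompactSupport hu_supp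
    · exact term_integrable i
    · exact ((ℓ i).continuous.smul hu.continuous).integrable_of_hasCompactSupport
        hu_supp.smul_left
    · exact fun x _ => (ℓ i).differentiableAt
    · exact fun x _ => hu.differentiable one_ne_zero x
  have expand (x : E) : fderiv ℝ u x x = ∑ i, ℓ i x • fderiv ℝ u x (b i) :=
    calc fderiv ℝ u x x = fderiv ℝ u x (∑ i, b.repr x i • b i) := by rw [b.sum_repr]
      _ = ∑ i, ℓ i x • fderiv ℝ u x (b i) := by simp only [map_sum, map_smul]; rfl
  simp only [expand]
  rw [integral_finsetSum _ fun i _ => term_integrable i]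
  simp [term_integral, ← Nat.cast_smul_eq_nsmul ℝ]

variable {E : Type*} [NormedAddCommGroup E] [InnerProductSpace ℝ E] {φ : E → ℝ}

theorem contDiff_inv_one_add_norm_sq {n : WithTop ℕ∞} :
    ContDiff ℝ n fun x : E => (1 + ‖x‖ ^ 2)⁻¹ :=
  (contDiff_const.add (contDiff_norm_sq ℝ)).inv fun x => by positivity

theorem fderiv_inv_one_add_norm_sq_mul_sq_apply_self {x : E} (hφ : DifferentiableAt ℝ φ x) :
    fderiv ℝ (fun y => (1 + ‖y‖ ^ 2)⁻¹ * φ y ^ 2) x x =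
      2 * ((1 + ‖x‖ ^ 2)⁻¹ * φ x * fderiv ℝ φ x x) -
        2 * ((1 + ‖x‖ ^ 2)⁻¹ * φ x ^ 2) * ((1 + ‖x‖ ^ 2)⁻¹ * ‖x‖ ^ 2) := by
  have hweight := (hasDerivAt_inv (by positivity : 1 + ‖x‖ ^ 2 ≠ 0)).comp_hasFDerivAt x
    ((hasStrictFDerivAt_norm_sq x).hasFDerivAt.const_add 1)
  have hprod := hweight.mul (hφ.hasFDerivAt.pow 2)
  refine (DFunLike.congr_fun hprod.fderiv x).trans ?_
  simp only [Function.comp_apply, Nat.add_one_sub_one, pow_one, nsmul_eq_mul, Nat.cast_ofNat,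
    ← inv_pow, neg_smul, smul_neg, add_apply, smul_apply, smul_eq_mul, neg_apply,
    coe_innerSL_apply, inner_self_eq_norm_sq_to_K, Real.ringHom_apply]
  ring

theorem neg_fderiv_inv_one_add_norm_sq_mul_sq_apply_self_le {x : E}
    (hφ : DifferentiableAt ℝ φ x) :
    -fderiv ℝ (fun y => (1 + ‖y‖ ^ 2)⁻¹ * φ y ^ 2) x x ≤
      2 * (√(1 + ‖x‖ ^ 2)⁻¹ * |φ x| * ‖fderiv ℝ φ x‖) + 2 * ((1 + ‖x‖ ^ 2)⁻¹ * φ x ^ 2) := by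
  rw [fderiv_inv_one_add_norm_sq_mul_sq_apply_self hφ]
  have hpos : 0 < 1 + ‖x‖ ^ 2 := by positivity
  set W := (1 + ‖x‖ ^ 2)⁻¹ with hW
  have hWpos : 0 < W := inv_pos.2 hpos
  have hWx : W * ‖x‖ ^ 2 ≤ 1 := by
    rw [hW, inv_mul_le_iff₀ hpos]
    linarith
  have hsqrtWx : √W * ‖x‖ ≤ 1 := by
    refine (sq_le_one_iff₀ (by positivity)).1 ?_
    rwa [mul_pow, Real.sq_sqrt hWpos.le]
  have hradial : |W * φ x * fderiv ℝ φ x x| ≤ √W * |φ x| * ‖fderiv ℝ φ x‖ :=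
    calc |W * φ x * fderiv ℝ φ x x|
        = W * |φ x| * |fderiv ℝ φ x x| := by rw [abs_mul, abs_mul, abs_of_pos hWpos]
      _ ≤ W * |φ x| * (‖fderiv ℝ φ x‖ * ‖x‖) := by
        gcongr
        exact (fderiv ℝ φ x).le_opNorm x
      _ = √W * |φ x| * ‖fderiv ℝ φ x‖ * (√W * ‖x‖) := by
        nth_rw 1 [← Real.mul_self_sqrt hWpos.le]
        ring
      _ ≤ √W * |φ x| * ‖fderiv ℝ φ x‖ := mul_le_of_le_one_right (by positivity) hsqrtWx
  have hsq : 2 * (W * φ x ^ 2) * (W * ‖x‖ ^ 2) ≤ 2 * (W * φ x ^ 2) :=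
    mul_le_of_le_one_right (by positivity) hWx
  linarith [neg_le_of_abs_le hradial]

variable [MeasurableSpace E] [BorelSpace E] [FiniteDimensional ℝ E]
  (μ : Measure E) [μ.IsAddHaarMeasure]

theorem finrank_sub_two_mul_integral_inv_one_add_norm_sq_mul_sq_le
    (hφ : ContDiff ℝ 1 φ) (hφ_supp : HasCompactSupport φ) :
    (finrank ℝ E - 2) * ∫ x, (1 + ‖x‖ ^ 2)⁻¹ * φ x ^ 2 ∂μ ≤
      2 * ∫ x, √(1 + ‖x‖ ^ 2)⁻¹ * |φ x| * ‖fderiv ℝ φ x‖ ∂μ := by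
  set u : E → ℝ := fun x => (1 + ‖x‖ ^ 2)⁻¹ * φ x ^ 2
  have hu : ContDiff ℝ 1 u := contDiff_inv_one_add_norm_sq.mul (hφ.pow 2)
  have hu_supp : HasCompactSupport u := (hφ_supp.comp_left (zero_pow two_ne_zero)).mul_left
  have hu_int : Integrable u μ := hu.continuous.integrable_of_hasCompactSupport hu_supp
  have hradial_int : Integrable (fun x => fderiv ℝ u x x) μ :=
    ((hu.continuous_fderiv one_ne_zero).clm_apply continuous_id).integrable_of_hasCompactSupport
      ((hu_supp.fderiv ℝ).mono' <| (Function.support_subset_iff'.2 fun x hx => by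
        simp [image_eq_zero_of_notMem_tsupport hx]))
  have hweight : Continuous fun x : E => (1 + ‖x‖ ^ 2)⁻¹ :=
    contDiff_inv_one_add_norm_sq (n := 0).continuous
  have hprod_int : Integrable (fun x => √(1 + ‖x‖ ^ 2)⁻¹ * |φ x| * ‖fderiv ℝ φ x‖) μ :=
    ((hweight.sqrt.mul hφ.continuous.abs).mul
      (hφ.continuous_fderiv one_ne_zero).norm).integrable_of_hasCompactSupport
        (hφ_supp.fderiv ℝ).norm.mul_left
  have heuler : finrank ℝ E * ∫ x, u x ∂μ ≤
      2 * ∫ x, √(1 + ‖x‖ ^ 2)⁻¹ * |φ x| * ‖fderiv ℝ φ x‖ ∂μ + 2 * ∫ x, u x ∂μ :=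
    calc finrank ℝ E * ∫ x, u x ∂μ
        = ∫ x, -fderiv ℝ u x x ∂μ := by
          rw [integral_neg, integral_fderiv_apply_self μ hu hu_supp, neg_neg, smul_eq_mul]
      _ ≤ ∫ x, (2 * (√(1 + ‖x‖ ^ 2)⁻¹ * |φ x| * ‖fderiv ℝ φ x‖) + 2 * u x) ∂μ :=
          integral_mono hradial_int.neg ((hprod_int.const_mul 2).add (hu_int.const_mul 2))
            fun x => neg_fderiv_inv_one_add_norm_sq_mul_sq_apply_self_le
              (hφ.differentiable one_ne_zero x)
      _ = _ := by
          rw [integral_add (hprod_int.const_mul 2) (hu_int.const_mul 2), integral_const_mul,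
            integral_const_mul]
  linarith

theorem sqrt_integral_inv_one_add_norm_sq_mul_sq_le (hdim : 2 < finrank ℝ E)
    (hφ : ContDiff ℝ 1 φ) (hφ_supp : HasCompactSupport φ) :
    √(∫ x, (1 + ‖x‖ ^ 2)⁻¹ * φ x ^ 2 ∂μ) ≤
      2 / (finrank ℝ E - 2) * √(∫ x, ‖fderiv ℝ φ x‖ ^ 2 ∂μ) := by
  have hinv_nonneg (x : E) : 0 ≤ (1 + ‖x‖ ^ 2)⁻¹ := by positivity
  have hroot : MemLp (fun x => √(1 + ‖x‖ ^ 2)⁻¹ * |φ x|) 2 μ :=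
    (contDiff_inv_one_add_norm_sq (n := 0).continuous.sqrt.mul
      hφ.continuous.abs).memLp_of_hasCompactSupport hφ_supp.norm.mul_left
  have hgrad : MemLp (fun x => ‖fderiv ℝ φ x‖) 2 μ :=
    ((hφ.continuous_fderiv one_ne_zero).memLp_of_hasCompactSupport (hφ_supp.fderiv ℝ)).norm
  have hcs := integral_mul_le_sqrt_mul_sqrt hroot hgrad
  simp only [mul_pow, sq_abs, Real.sq_sqrt (hinv_nonneg _)] at hcs
  have hineq := finrank_sub_two_mul_integral_inv_one_add_norm_sq_mul_sq_le μ hφ hφ_supp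
  rw [← Real.sq_sqrt (integral_nonneg fun x => mul_nonneg (hinv_nonneg x) (sq_nonneg (φ x)))]
    at hineq
  set S := √(∫ x, (1 + ‖x‖ ^ 2)⁻¹ * φ x ^ 2 ∂μ)
  set D := √(∫ x, ‖fderiv ℝ φ x‖ ^ 2 ∂μ)
  have hdim' : (0 : ℝ) < finrank ℝ E - 2 := sub_pos.2 (by exact_mod_cast hdim)
  rw [div_mul_eq_mul_div, le_div_iff₀ hdim']
  rcases (show 0 ≤ S from Real.sqrt_nonneg _).eq_or_lt with hS_zero | hS_pos
  · rw [← hS_zero, zero_mul]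
    positivity
  · refine le_of_mul_le_mul_left ?_ hS_pos
    linarith

end WeightedPoincare

section WeightedL2

variable {E : Type*} [SeminormedAddCommGroup E] {Ω : Set (Euc N)} {s : ℝ} {f g : Euc N → ℝ}
  {v : Euc N → Euc N}

theorem memL2V_zero_iff_memLp : MemL2V Ω 0 v ↔ MemLp v 2 (volume.restrict Ω) := by
  simp only [MemL2V, Real.rpow_zero, one_mul]
  exact ⟨fun h => (memLp_two_iff_integrable_sq_norm h.1).2 h.2,
    fun h => ⟨h.1, (memLp_two_iff_integrable_sq_norm h.1).1 h⟩⟩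

theorem continuous_one_add_norm_sq_rpow (s : ℝ) :
    Continuous fun x : E => (1 + ‖x‖ ^ 2) ^ s :=
  Continuous.rpow_const (by fun_prop) fun x => Or.inl (by positivity)

theorem one_add_norm_sq_rpow_half_mul_sq (s a : ℝ) (x : E) :
    ((1 + ‖x‖ ^ 2) ^ (s / 2) * a) ^ 2 = (1 + ‖x‖ ^ 2) ^ s * a ^ 2 := by
  rw [mul_pow, ← Real.rpow_mul_natCast (by positivity)]
  norm_num

theorem memL2_iff_memLp :
    MemL2 Ω s f ↔ MemLp (fun x => (1 + ‖x‖ ^ 2) ^ (s / 2) * f x) 2 (volume.restrict Ω) := by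
  have hweight (r : ℝ) := (continuous_one_add_norm_sq_rpow (E := Euc N) r).aestronglyMeasurable
    (μ := volume.restrict Ω)
  have hcancel (x : Euc N) :
      (1 + ‖x‖ ^ 2) ^ (-(s / 2)) * ((1 + ‖x‖ ^ 2) ^ (s / 2) * f x) = f x := by
    rw [← mul_assoc, ← Real.rpow_add (by positivity)]
    simp
  constructor
  · rintro ⟨hf, hf_int⟩
    refine (memLp_two_iff_integrable_sq ((hweight _).mul hf)).2 ?_
    exact hf_int.congr (.of_forall fun x => (one_add_norm_sq_rpow_half_mul_sq s (f x) x).symm)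
  · intro hf
    refine ⟨((hweight (-(s / 2))).mul hf.1).congr (.of_forall hcancel), ?_⟩
    simpa only [one_add_norm_sq_rpow_half_mul_sq] using hf.integrable_sq

theorem MemL2.add (hf : MemL2 Ω s f) (hg : MemL2 Ω s g) : MemL2 Ω s fun x => f x + g x := by
  rw [memL2_iff_memLp] at *
  exact (memLp_congr_ae (.of_forall fun x => mul_add _ _ _)).2 (hf.add hg)

theorem one_add_norm_sq_rpow_half_mul_mul (s a b : ℝ) (x : E) :
    (1 + ‖x‖ ^ 2) ^ (s / 2) * a * ((1 + ‖x‖ ^ 2) ^ (-s / 2) * b) = a * b := by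
  have : (1 + ‖x‖ ^ 2) ^ (s / 2) * (1 + ‖x‖ ^ 2) ^ (-s / 2) = 1 := by
    rw [← Real.rpow_add (by positivity), neg_div, add_neg_cancel, Real.rpow_zero]
  rw [mul_mul_mul_comm, this, one_mul]

theorem MemL2.integrable_mul (hf : MemL2 Ω s f) (hg : MemL2 Ω (-s) g) :
    Integrable (fun x => f x * g x) (volume.restrict Ω) :=
  ((memL2_iff_memLp.1 hf).integrable_mul (memL2_iff_memLp.1 hg)).congr
    (.of_forall fun x => one_add_norm_sq_rpow_half_mul_mul s (f x) (g x) x)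

theorem MemL2.integral_mul_le (hf : MemL2 Ω s f) (hg : MemL2 Ω (-s) g) :
    ∫ x in Ω, f x * g x ≤ nrmL2 Ω s f * nrmL2 Ω (-s) g := by
  simpa only [nrmL2, sqL2, one_add_norm_sq_rpow_half_mul_mul, one_add_norm_sq_rpow_half_mul_sq]
    using integral_mul_le_sqrt_mul_sqrt (memL2_iff_memLp.1 hf) (memL2_iff_memLp.1 hg)

end WeightedL2

section TestFunctions

theorem norm_gradient_eq_norm_fderiv {𝕜 F : Type*} [RCLike 𝕜] [NormedAddCommGroup F]
    [InnerProductSpace 𝕜 F] [CompleteSpace F] (φ : F → 𝕜) (x : F) :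
    ‖gradient φ x‖ = ‖fderiv 𝕜 φ x‖ :=
  (InnerProductSpace.toDual 𝕜 F).symm.norm_map _

variable {Ω : Set (Euc N)} {φ : Euc N → ℝ}

theorem IsTest.memL2 (hφ : IsTest Ω φ) (s : ℝ) : MemL2 Ω s φ := by
  refine memL2_iff_memLp.2 (MemLp.restrict Ω ?_)
  exact ((continuous_one_add_norm_sq_rpow _).mul hφ.1.continuous).memLp_of_hasCompactSupport
    hφ.2.1.mul_left

theorem IsTest.memL2V_gradient (hφ : IsTest Ω φ) : MemL2V Ω 0 (gradient φ) := by
  refine memL2V_zero_iff_memLp.2 (MemLp.restrict Ω ?_)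
  exact ((InnerProductSpace.toDual ℝ (Euc N)).symm.continuous.comp
    (hφ.1.continuous_fderiv (by simp))).memLp_of_hasCompactSupport
      ((hφ.2.1.fderiv ℝ).comp_left (map_zero _))

theorem IsTest.sqL2V_zero_gradient (hφ : IsTest Ω φ) :
    sqL2V Ω 0 (gradient φ) = ∫ x, ‖fderiv ℝ φ x‖ ^ 2 := by
  simp only [sqL2V, Real.rpow_zero, one_mul, norm_gradient_eq_norm_fderiv]
  refine setIntegral_eq_integral_of_forall_compl_eq_zero fun x hx => ?_
  rw [image_eq_zero_of_notMem_tsupport fun h => hx (hφ.2.2 (tsupport_fderiv_subset ℝ h))]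
  simp

theorem IsTest.sqL2_neg_one (hφ : IsTest Ω φ) :
    sqL2 Ω (-1) φ = ∫ x, (1 + ‖x‖ ^ 2)⁻¹ * φ x ^ 2 := by
  simp only [sqL2, Real.rpow_neg_one]
  refine setIntegral_eq_integral_of_forall_compl_eq_zero fun x hx => ?_
  simp [image_eq_zero_of_notMem_tsupport fun h => hx (hφ.2.2 h)]

theorem IsTest.nrmL2_neg_one_le (hφ : IsTest Ω φ) (hN : 3 ≤ N) :
    nrmL2 Ω (-1) φ ≤ cN N * nrmL2V Ω 0 (gradient φ) := by
  have hdim : Module.finrank ℝ (Euc N) = N := finrank_euclideanSpace_fin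
  have hpoincare := sqrt_integral_inv_one_add_norm_sq_mul_sq_le volume
    (by rw [hdim]; exact hN) (hφ.1.of_le (by simp)) hφ.2.1
  rwa [hdim, ← hφ.sqL2_neg_one, ← hφ.sqL2V_zero_gradient] at hpoincare

end TestFunctions

section EnergySpace

variable {Ω : Set (Euc N)} (M : Coeff N Ω) {v w : Euc N → Euc N}

namespace Coeff

theorem aestronglyMeasurable_apply (hv : AEStronglyMeasurable v (volume.restrict Ω)) :
    AEStronglyMeasurable (fun x => M.A x (v x)) (volume.restrict Ω) := by
  let b := EuclideanSpace.basisFun (Fin N) ℝ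
  have expand (x : Euc N) : M.A x (v x) = ∑ i, ⟪b i, v x⟫ • M.A x (b i) :=
    calc M.A x (v x) = M.A x (∑ i, ⟪b i, v x⟫ • b i) := by rw [b.sum_repr']
      _ = ∑ i, ⟪b i, v x⟫ • M.A x (b i) := by simp only [map_sum, map_smul]
  simp only [expand]
  exact Finset.aestronglyMeasurable_fun_sum _ fun i _ =>
    (aestronglyMeasurable_const.inner hv).fun_smul (M.meas (b i))

theorem memLp_apply (hv : MemL2V Ω 0 v) :
    MemLp (fun x => M.A x (v x)) 2 (volume.restrict Ω) := by
  obtain ⟨C, hC⟩ := M.bdd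
  exact (memL2V_zero_iff_memLp.1 hv).of_le_mul (M.aestronglyMeasurable_apply hv.1)
    (hC.mono fun x hx => hx (v x))

theorem integrable_inner_apply (hv : MemL2V Ω 0 v) (hw : MemL2V Ω 0 w) :
    Integrable (fun x => ⟪M.A x (v x), w x⟫) (volume.restrict Ω) := by
  have hAv := M.memLp_apply hv
  refine (hAv.norm.integrable_mul (memL2V_zero_iff_memLp.1 hw).norm).mono
    (hAv.1.inner hw.1) (.of_forall fun x => ?_)
  simpa using norm_inner_le_norm (𝕜 := ℝ) (M.A x (v x)) (w x)

theorem sqA_nonneg (v : Euc N → Euc N) : 0 ≤ sqA Ω M.A v := by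
  refine integral_nonneg_of_ae ?_
  filter_upwards [M.coer] with x hx
  exact le_trans (by positivity) (hx (v x))

theorem nrmL2V_zero_le_nrmA (hv : MemL2V Ω 0 v) : nrmL2V Ω 0 v ≤ M.α * nrmA Ω M.A v := by
  refine Real.sqrt_le_iff.2 ⟨mul_nonneg M.α_pos.le (Real.sqrt_nonneg _), ?_⟩
  rw [mul_pow, nrmA, Real.sq_sqrt (M.sqA_nonneg v), sqA, ipA, ← integral_const_mul]
  refine integral_mono_ae hv.2 ((M.integrable_inner_apply hv hv).const_mul _) ?_
  filter_upwards [M.coer] with x hx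
  have hα := M.α_pos
  have hvx := hx (v x)
  rw [inv_pow, inv_mul_le_iff₀ (by positivity)] at hvx
  simpa using hvx

theorem exists_nrmA_le_mul_nrmL2V_zero :
    ∃ C, ∀ v, MemL2V Ω 0 v → nrmA Ω M.A v ≤ C * nrmL2V Ω 0 v := by
  obtain ⟨C, hC⟩ := M.bdd
  refine ⟨√|C|, fun v hv => ?_⟩
  rw [nrmA, nrmL2V, ← Real.sqrt_mul (abs_nonneg C), sqL2V, ← integral_const_mul]
  refine Real.sqrt_le_sqrt <|
    integral_mono_ae (M.integrable_inner_apply hv hv) (hv.2.const_mul |C|) ?_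
  filter_upwards [hC] with x hx
  calc ⟪M.A x (v x), v x⟫ ≤ ‖M.A x (v x)‖ * ‖v x‖ := real_inner_le_norm _ _
    _ ≤ |C| * ‖v x‖ * ‖v x‖ := by
      gcongr
      exact (hx (v x)).trans (by gcongr; exact le_abs_self C)
    _ = |C| * ((1 + ‖x‖ ^ 2) ^ (0 : ℝ) * ‖v x‖ ^ 2) := by rw [Real.rpow_zero]; ring

end Coeff

/-- The vector space underlying `L²(Ω;ℝ^N)`, consisting of functions rather than
almost-everywhere classes. -/
def l2Fields (Ω : Set (Euc N)) : Submodule ℝ (Euc N → Euc N) where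
  carrier := {v | MemL2V Ω 0 v}
  add_mem' hv hw := memL2V_zero_iff_memLp.2 <|
    (memL2V_zero_iff_memLp.1 hv).add (memL2V_zero_iff_memLp.1 hw)
  zero_mem' := memL2V_zero_iff_memLp.2 MemLp.zero
  smul_mem' c _ hv := memL2V_zero_iff_memLp.2 <| (memL2V_zero_iff_memLp.1 hv).const_smul c

namespace Coeff

/-- The space `L²(Ω;ℝ^N)` with the inner product `⟨·,·⟩_A`. The norm `‖·‖_A` is only a seminorm
here, since fields that agree almost everywhere are not identified. -/
def EnergySpace (_M : Coeff N Ω) : Type := l2Fields Ω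

instance : AddCommGroup M.EnergySpace := inferInstanceAs (AddCommGroup (l2Fields Ω))

instance : Module ℝ M.EnergySpace := inferInstanceAs (Module ℝ (l2Fields Ω))

instance : PreInnerProductSpace.Core ℝ M.EnergySpace where
  inner v w := ipA Ω M.A v.1 w.1
  conj_inner_symm v w := integral_congr_ae <| .of_forall fun x =>
    (M.symm x _ _).trans (real_inner_comm _ _)
  re_inner_nonneg v := M.sqA_nonneg v.1
  add_left u v w := by
    refine Eq.trans ?_ (integral_add (M.integrable_inner_apply u.2 w.2)
      (M.integrable_inner_apply v.2 w.2))
    exact integral_congr_ae <| .of_forall fun x =>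
      (congrArg (⟪·, w.1 x⟫) (map_add (M.A x) (u.1 x) (v.1 x))).trans (inner_add_left _ _ _)
  smul_left v w c := by
    refine Eq.trans ?_ (integral_const_mul c _)
    exact integral_congr_ae <| .of_forall fun x =>
      (congrArg (⟪·, w.1 x⟫) (map_smul (M.A x) c (v.1 x))).trans (real_inner_smul_left _ _ _)

instance : SeminormedAddCommGroup M.EnergySpace :=
  InnerProductSpace.Core.toSeminormedAddCommGroup (𝕜 := ℝ)

instance : InnerProductSpace ℝ M.EnergySpace := InnerProductSpace.ofCore inferInstance

/-- A square-integrable field as an element of the energy space. -/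
def toEnergy (v : Euc N → Euc N) (hv : MemL2V Ω 0 v) : M.EnergySpace := ⟨v, hv⟩

variable {M}

theorem norm_sq_eq_sqA (z : M.EnergySpace) : ‖z‖ ^ 2 = sqA Ω M.A z.1 :=
  Real.sq_sqrt (M.sqA_nonneg z.1)

variable (M) in
/-- The gradients of test functions, as elements of the energy space. -/
def testGradients : Set M.EnergySpace :=
  {z | ∃ (φ : Euc N → ℝ) (hφ : IsTest Ω φ), M.toEnergy (gradient φ) hφ.memL2V_gradient = z}

theorem toEnergy_mem_closure_testGradients (hv : MemG Ω v) :
    M.toEnergy v hv.1 ∈ closure M.testGradients := by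
  obtain ⟨hvL2, φ, hφ, hlim⟩ := hv
  obtain ⟨C, hC⟩ := M.exists_nrmA_le_mul_nrmL2V_zero
  refine mem_closure_of_tendsto (b := atTop) (f := fun n => M.toEnergy _ (hφ n).memL2V_gradient)
    (tendsto_iff_norm_sub_tendsto_zero.2 ?_) (.of_forall fun n => ⟨φ n, hφ n, rfl⟩)
  refine squeeze_zero (fun n => norm_nonneg _) (fun n => ?_) (by simpa using hlim.const_mul C)
  rw [norm_sub_rev]
  exact hC _ ((l2Fields Ω).sub_mem hvL2 (hφ n).memL2V_gradient)

end Coeff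

end EnergySpace

section UpperBound

variable {Ω : Set (Euc N)} {M : Coeff N Ω} {f dv u φ : Euc N → ℝ}
  {g gu gu' wt v w : Euc N → Euc N}

theorem MemH10.memG (h : MemH10 Ω u g) : MemG Ω g :=
  let ⟨_, hg, _, φ, hφ, _, hlim⟩ := h
  ⟨hg, φ, hφ, hlim⟩

theorem IsTest.integral_mul_le_mul_nrmA_gradient (hφ : IsTest Ω φ) (hN : 3 ≤ N) (M : Coeff N Ω)
    (hf : MemL2 Ω 1 f) :
    ∫ x in Ω, f x * φ x ≤ M.α * cN N * nrmL2 Ω 1 f * nrmA Ω M.A (gradient φ) := by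
  have hcN : 0 ≤ cN N := div_nonneg zero_le_two
    (sub_nonneg.2 (by exact_mod_cast (Nat.le_succ 2).trans hN))
  have hf_nonneg : 0 ≤ nrmL2 Ω 1 f := Real.sqrt_nonneg _
  calc ∫ x in Ω, f x * φ x ≤ nrmL2 Ω 1 f * nrmL2 Ω (-1) φ := hf.integral_mul_le (hφ.memL2 (-1))
    _ ≤ nrmL2 Ω 1 f * (cN N * (M.α * nrmA Ω M.A (gradient φ))) := by
      gcongr
      exact (hφ.nrmL2_neg_one_le hN).trans
        (mul_le_mul_of_nonneg_left (M.nrmL2V_zero_le_nrmA hφ.memL2V_gradient) hcN)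
    _ = M.α * cN N * nrmL2 Ω 1 f * nrmA Ω M.A (gradient φ) := by ring

theorem IsAInv.ipA_eq_integral_inner (hw : IsAInv Ω M.A v w) (z : Euc N → Euc N) :
    ipA Ω M.A w z = ∫ x in Ω, ⟪v x, z x⟫ :=
  integral_congr_ae <| hw.2.mono fun x hx => by simp only [hx]

theorem ipA_sub_gradient_eq_integral_add_mul (hf : MemL2 Ω 1 f) (hdv : MemL2 Ω 1 dv)
    (hdiv : IsWeakDiv Ω v dv) (hw : IsAInv Ω M.A v w) (hφ : IsTest Ω φ)
    (hweak : ipA Ω M.A gu (gradient φ) = ∫ x in Ω, f x * φ x) :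
    ipA Ω M.A gu (gradient φ) - ipA Ω M.A w (gradient φ) = ∫ x in Ω, (f x + dv x) * φ x := by
  rw [hweak, hw.ipA_eq_integral_inner, hdiv φ hφ, sub_neg_eq_add]
  simp only [add_mul]
  exact (integral_add (hf.integrable_mul (hφ.memL2 _)) (hdv.integrable_mul (hφ.memL2 _))).symm

theorem stmt_12_general (hN : 3 ≤ N) (hf : MemL2 Ω 1 f) (hgu : MemL2V Ω 0 gu)
    (hweak : ∀ φ, IsTest Ω φ → ipA Ω M.A gu (gradient φ) = ∫ x in Ω, f x * φ x)
    (hwt : MemL2V Ω 0 wt) (hdv : MemL2 Ω 1 dv) (hdiv : IsWeakDiv Ω v dv) (hw : IsAInv Ω M.A v w)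
    (hdiff : MemG Ω fun x => gu x - gu' x) :
    sqA Ω M.A (fun x => gu x - wt x) ≤
      (M.α * cN N * nrmL2 Ω 1 (fun x => f x + dv x) + nrmA Ω M.A fun x => wt x - w x) ^ 2 +
        sqA Ω M.A fun x => gu' x - wt x := by
  set P := M.toEnergy gu hgu
  set R := M.toEnergy wt hwt
  set W := M.toEnergy w hw.1
  set G := M.toEnergy _ hdiff.1
  set a := M.α * cN N * nrmL2 Ω 1 (fun x => f x + dv x)
  have hbound : ∀ y ∈ M.testGradients, ⟪P - R, y⟫ ≤ (a + ‖R - W‖) * ‖y‖ := by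
    rintro _ ⟨φ, hφ, rfl⟩
    set Y := M.toEnergy (gradient φ) hφ.memL2V_gradient
    have hresidual : ⟪P, Y⟫ - ⟪W, Y⟫ ≤ a * ‖Y‖ :=
      (ipA_sub_gradient_eq_integral_add_mul hf hdv hdiv hw hφ (hweak φ hφ)).trans_le
        (hφ.integral_mul_le_mul_nrmA_gradient hN M (hf.add hdv))
    calc ⟪P - R, Y⟫ = (⟪P, Y⟫ - ⟪W, Y⟫) + ⟪W - R, Y⟫ := by simp only [inner_sub_left]; ring
      _ ≤ a * ‖Y‖ + ‖W - R‖ * ‖Y‖ := add_le_add hresidual (real_inner_le_norm _ _)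
      _ = (a + ‖R - W‖) * ‖Y‖ := by rw [norm_sub_rev, add_mul]
  have hPRG : (P - R - G).1 = fun x => gu' x - wt x :=
    funext fun x => show gu x - wt x - (gu x - gu' x) = gu' x - wt x by abel
  have habstract := norm_sq_le_sq_add_norm_sub_sq_of_mem_closure hbound
    (Coeff.toEnergy_mem_closure_testGradients hdiff)
  rwa [Coeff.norm_sq_eq_sqA, Coeff.norm_sq_eq_sqA, hPRG] at habstract

end UpperBound

/-- Combined non-conforming upper bound:
`‖E‖²_A ≤ (c_{N,α}‖f + div v‖ + ‖A⁻¹(ṽ − v)‖_A)² + ‖∇u − A⁻¹ṽ‖²_A`. -/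
theorem stmt_12 (Ω : Set (Euc N)) (hΩ : IsOpen Ω) (hN : 3 ≤ N) (M : Coeff N Ω)
    (f : Euc N → ℝ) (hf : MemL2 Ω 1 f)
    (uh : Euc N → ℝ) (gu : Euc N → Euc N)
    (huh : MemL2 Ω (-1) uh) (hgu : MemL2V Ω 0 gu) (hguw : IsWeakGrad Ω uh gu)
    (hweak : ∀ φ : Euc N → ℝ, IsTest Ω φ →
      (∫ x in Ω, ⟪M.A x (gu x), gradient φ x⟫) = ∫ x in Ω, f x * φ x)
    (vt : Euc N → Euc N) (hvt : MemL2V Ω 0 vt)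
    (wt : Euc N → Euc N) (hwt : IsAInv Ω M.A vt wt) :
    ∀ (v : Euc N → Euc N) (dv : Euc N → ℝ) (w : Euc N → Euc N),
      MemL2V Ω 0 v → MemL2 Ω 1 dv → IsWeakDiv Ω v dv → IsAInv Ω M.A v w →
    ∀ (u : Euc N → ℝ) (gu' : Euc N → Euc N),
      MemL2 Ω (-1) u → MemL2V Ω 0 gu' → IsWeakGrad Ω u gu' →
      MemH10 Ω (fun x => uh x - u x) (fun x => gu x - gu' x) →
      sqA Ω M.A (fun x => gu x - wt x) ≤
        (M.α * cN N * nrmL2 Ω 1 (fun x => f x + dv x) +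
            nrmA Ω M.A (fun x => wt x - w x)) ^ 2 +
          sqA Ω M.A (fun x => gu' x - wt x) :=
  fun _ _ _ _ hdv hdiv hw _ _ _ _ _ h =>
    stmt_12_general hN hf hgu hweak hwt.1 hdv hdiv hw h.memG
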